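/- arXiv:2410.10451 — 4 statements merged into one kernel-verified Lean document; each statement's English description precedes it below -/
import Mathlib

section
/- Let E be a real inner product space, K a positive natural number, η ≥ 0, G ≥ 0, and Emax ≥ 1 a natural number. Suppose for each k ∈ Fin K the vector w_k ∈ E has the form w_k = w₀ − η • (∑_{e=0}^{s_k − 1} g_{k,e}) for some w₀ ∈ E, some s_k ≤ Emax − 1, and vectors g_{k,e} ∈ E with ‖g_{k,e}‖ ≤ G for every e < s_k. Let w̄ = (1/K) • ∑_{k} w_k be the average of the local models. Then ∑_{k ∈ Fin K} ‖w̄ − w_k‖² ≤ 4 K η² (Emax − 1)² G². -/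
open scoped RealInnerProductSpace

/-! All local models lie in one closed ball about the common starting point. Balls are convex, so
the mean of the models lies in that ball as well, and each distance to the mean is at most a
diameter; squaring the diameter gives the factor `4`. -/

theorem mean_mem_of_convex {𝕜 V ι : Type*} [Field 𝕜] [LinearOrder 𝕜] [IsStrictOrderedRing 𝕜]
    [AddCommGroup V] [Module 𝕜 V] [Fintype ι] [Nonempty ι] {S : Set V} {x : ι → V}
    (hS : Convex 𝕜 S) (hx : ∀ i, x i ∈ S) :
    (1 / (Fintype.card ι : 𝕜)) • ∑ i, x i ∈ S := by
  rw [Finset.smul_sum]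
  have hweights : ∑ _i : ι, 1 / (Fintype.card ι : 𝕜) = 1 := by simp
  exact hS.sum_mem (fun _ _ ↦ by positivity) hweights fun i _ ↦ hx i

section ClosedBall

variable {ι E : Type*} [Fintype ι] [SeminormedAddCommGroup E] [NormedSpace ℝ E]
  {c : E} {R : ℝ} {x : ι → E}

theorem norm_mean_sub_le_of_mem_closedBall (hx : ∀ i, x i ∈ Metric.closedBall c R) (k : ι) :
    ‖(1 / (Fintype.card ι : ℝ)) • (∑ i, x i) - x k‖ ≤ 2 * R := by
  have : Nonempty ι := ⟨k⟩
  have hmean := mean_mem_of_convex (convex_closedBall c R) hx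
  rw [← dist_eq_norm, two_mul]
  exact (dist_triangle_right _ _ c).trans (add_le_add hmean (hx k))

theorem sum_sq_norm_mean_sub_le_of_mem_closedBall (hx : ∀ i, x i ∈ Metric.closedBall c R) :
    ∑ k, ‖(1 / (Fintype.card ι : ℝ)) • (∑ i, x i) - x k‖ ^ 2
      ≤ Fintype.card ι * (2 * R) ^ 2 := by
  rw [← nsmul_eq_mul]
  refine Finset.sum_le_card_nsmul _ _ _ fun k _ ↦ ?_
  gcongr
  exact norm_mean_sub_le_of_mem_closedBall hx k

end ClosedBall

theorem sub_smul_sum_mem_closedBall {𝕜 E α : Type*} [NormedField 𝕜] [SeminormedAddCommGroup E]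
    [NormedSpace 𝕜 E] {t : Finset α} {g : α → E} {G : ℝ} (hg : ∀ e ∈ t, ‖g e‖ ≤ G)
    (x : E) (η : 𝕜) :
    x - η • ∑ e ∈ t, g e ∈ Metric.closedBall x (‖η‖ * (t.card * G)) := by
  have hsum : ‖∑ e ∈ t, g e‖ ≤ t.card * G := by
    simpa only [Finset.sum_const, nsmul_eq_mul] using norm_sum_le_of_le t hg
  rw [mem_closedBall_iff_norm, sub_sub_cancel_left, norm_neg, norm_smul]
  gcongr

theorem local_models_divergence_bound_general
    {ι E : Type*} [Fintype ι] [SeminormedAddCommGroup E] [NormedSpace ℝ E]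
    {η G : ℝ} (hG : 0 ≤ G) {N : ℕ} {w : ι → E} {w₀ : E} {s : ι → ℕ} {g : ι → ℕ → E}
    (hs : ∀ k, s k ≤ N) (hg : ∀ k, ∀ e < s k, ‖g k e‖ ≤ G)
    (hw : ∀ k, w k = w₀ - η • ∑ e ∈ Finset.range (s k), g k e) :
    ∑ k, ‖(1 / (Fintype.card ι : ℝ)) • (∑ j, w j) - w k‖ ^ 2
      ≤ 4 * Fintype.card ι * η ^ 2 * (N : ℝ) ^ 2 * G ^ 2 := by
  have hball : ∀ k, w k ∈ Metric.closedBall w₀ (|η| * (N * G)) := fun k ↦ by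
    have hstep := sub_smul_sum_mem_closedBall (fun e he ↦ hg k e (Finset.mem_range.mp he)) w₀ η
    rw [← hw k, Finset.card_range, Real.norm_eq_abs] at hstep
    refine Metric.closedBall_subset_closedBall ?_ hstep
    gcongr
    exact hs k
  calc ∑ k, ‖(1 / (Fintype.card ι : ℝ)) • (∑ j, w j) - w k‖ ^ 2
      ≤ Fintype.card ι * (2 * (|η| * (N * G))) ^ 2 :=
        sum_sq_norm_mean_sub_le_of_mem_closedBall hball
    _ = 4 * Fintype.card ι * η ^ 2 * (N : ℝ) ^ 2 * G ^ 2 := by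
        rw [← sq_abs η]
        ring

/-- Deterministic form of Lemma 1: bound on the total squared divergence between
local models and their average. -/
theorem local_models_divergence_bound
    {E : Type*} [NormedAddCommGroup E] [InnerProductSpace ℝ E]
    (K : ℕ) (hK : 0 < K) (η G : ℝ) (hη : 0 ≤ η) (hG : 0 ≤ G)
    (Emax : ℕ) (hE : 1 ≤ Emax)
    (w : Fin K → E) (w₀ : E) (s : Fin K → ℕ) (g : Fin K → ℕ → E)
    (hs : ∀ k, s k ≤ Emax - 1)
    (hg : ∀ k, ∀ e < s k, ‖g k e‖ ≤ G)
    (hw : ∀ k, w k = w₀ - η • ∑ e ∈ Finset.range (s k), g k e) :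
    ∑ k, ‖(1 / (K : ℝ)) • (∑ j, w j) - w k‖ ^ 2
      ≤ 4 * K * η ^ 2 * ((Emax : ℝ) - 1) ^ 2 * G ^ 2 := by
  simpa only [Fintype.card_fin, Nat.cast_pred hE] using
    local_models_divergence_bound_general hG hs hg hw
end

section
/- Let E be a real inner product space, K a positive natural number, η ≥ 0, G ≥ 0, L ≥ 0, ε ≥ 0, and Emax ≥ 1 a natural number. Suppose for each k ∈ Fin K the vector w_k ∈ E has the form w_k = w₀ − η • (∑_{e=0}^{s_k − 1} g_{k,e}) for some common w₀ ∈ E, some s_k ≤ Emax − 1, and vectors g_{k,e} ∈ E with ‖g_{k,e}‖ ≤ G for every e < s_k. Let w̄ = (1/K) • ∑_{k} w_k. Let ∇F : E → E be Lipschitz with constant L, and for each k let v_k ∈ E satisfy ‖∇F(w_k) − v_k‖ ≤ ε. Then ∑_{k ∈ Fin K} ‖∇F(w̄) − v_k‖² ≤ 8 K η² (Emax − 1)² G² L² + 2 K ε². -/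
open scoped RealInnerProductSpace

/-!
All local models lie in the ball of radius `R = |η| (Emax - 1) G` about the common initial model.
Balls are convex, so the average lies there too and is within `2 R` of every local model; the
Lipschitz bound and `(a + b)² ≤ 2 (a² + b²)` then turn this into the bound on the gradients.
-/

open Finset Metric

lemma sub_smul_sum_range_mem_closedBall {𝕜 E : Type*} [SeminormedRing 𝕜]
    [SeminormedAddCommGroup E] [Module 𝕜 E] [IsBoundedSMul 𝕜 E] (η : 𝕜) {G : ℝ} (hG : 0 ≤ G)
    {m n : ℕ} (hmn : m ≤ n) (x : E) {g : ℕ → E} (hg : ∀ e < m, ‖g e‖ ≤ G) :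
    x - η • ∑ e ∈ range m, g e ∈ closedBall x (‖η‖ * (n * G)) := by
  have norm_sum_range_le : ‖∑ e ∈ range m, g e‖ ≤ n * G :=
    calc ‖∑ e ∈ range m, g e‖ ≤ ∑ _e ∈ range m, G :=
          norm_sum_le_of_le _ fun e he ↦ hg e (mem_range.mp he)
      _ = m * G := by rw [sum_const, card_range, nsmul_eq_mul]
      _ ≤ n * G := by gcongr
  rw [mem_closedBall, dist_self_sub_left]
  exact (norm_smul_le _ _).trans (by gcongr)

lemma inv_card_smul_sum_mem_convexHull_range {𝕜 E ι : Type*} [Field 𝕜] [LinearOrder 𝕜]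
    [IsStrictOrderedRing 𝕜] [AddCommGroup E] [Module 𝕜 E] [Fintype ι] [Nonempty ι] (w : ι → E) :
    (Fintype.card ι : 𝕜)⁻¹ • ∑ i, w i ∈ convexHull 𝕜 (Set.range w) := by
  rw [smul_sum]
  refine (convex_convexHull 𝕜 _).sum_mem (fun _ _ ↦ by positivity) ?_
    fun i _ ↦ subset_convexHull 𝕜 _ (Set.mem_range_self i)
  rw [sum_const, card_univ, nsmul_eq_mul, mul_inv_cancel₀ (by simp)]

lemma dist_le_two_mul_of_mem_convexHull {E : Type*} [SeminormedAddCommGroup E] [NormedSpace ℝ E]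
    {S : Set E} {c x y : E} {r : ℝ} (hS : S ⊆ closedBall c r) (hx : x ∈ convexHull ℝ S)
    (hy : y ∈ S) : dist x y ≤ 2 * r := by
  have hxc : dist x c ≤ r := convexHull_min hS (convex_closedBall c r) hx
  have hyc : dist y c ≤ r := hS hy
  linarith [dist_triangle_right x y c]

lemma sum_norm_sub_sq_le_of_local_steps {E ι : Type*} [SeminormedAddCommGroup E]
    [NormedSpace ℝ E] [Fintype ι] {η G : ℝ} (hG : 0 ≤ G) {n : ℕ} {w : ι → E} {w₀ : E}
    {s : ι → ℕ} {g : ι → ℕ → E} (hs : ∀ i, s i ≤ n) (hg : ∀ i, ∀ e < s i, ‖g i e‖ ≤ G)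
    (hw : ∀ i, w i = w₀ - η • ∑ e ∈ range (s i), g i e)
    {x : E} (hx : x ∈ convexHull ℝ (Set.range w)) :
    ∑ i, ‖x - w i‖ ^ 2 ≤ 4 * Fintype.card ι * η ^ 2 * n ^ 2 * G ^ 2 := by
  have range_subset : Set.range w ⊆ closedBall w₀ (‖η‖ * (n * G)) := by
    rintro _ ⟨i, rfl⟩
    exact hw i ▸ sub_smul_sum_range_mem_closedBall η hG (hs i) w₀ (hg i)
  calc ∑ i, ‖x - w i‖ ^ 2 ≤ ∑ _i : ι, (2 * (‖η‖ * (n * G))) ^ 2 := by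
        gcongr with i
        rw [← dist_eq_norm]
        exact dist_le_two_mul_of_mem_convexHull range_subset hx (Set.mem_range_self i)
    _ = 4 * Fintype.card ι * η ^ 2 * n ^ 2 * G ^ 2 := by
        rw [sum_const, card_univ, nsmul_eq_mul, Real.norm_eq_abs, ← sq_abs η]
        ring

lemma sum_norm_sub_sq_le_of_lipschitz {E F ι : Type*} [SeminormedAddCommGroup E]
    [SeminormedAddCommGroup F] [Fintype ι] {f : E → F} {L ε : ℝ} {x : E} {w : ι → E} {v : ι → F}
    (hf : ∀ i, ‖f x - f (w i)‖ ≤ L * ‖x - w i‖) (hv : ∀ i, ‖f (w i) - v i‖ ≤ ε) :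
    ∑ i, ‖f x - v i‖ ^ 2 ≤ 2 * L ^ 2 * ∑ i, ‖x - w i‖ ^ 2 + 2 * Fintype.card ι * ε ^ 2 := by
  have norm_sq_le (i : ι) : ‖f x - v i‖ ^ 2 ≤ 2 * L ^ 2 * ‖x - w i‖ ^ 2 + 2 * ε ^ 2 :=
    calc ‖f x - v i‖ ^ 2 ≤ (L * ‖x - w i‖ + ε) ^ 2 := by
          gcongr
          exact (norm_sub_le_norm_sub_add_norm_sub _ (f (w i)) _).trans (add_le_add (hf i) (hv i))
      _ ≤ 2 * ((L * ‖x - w i‖) ^ 2 + ε ^ 2) := add_sq_le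
      _ = 2 * L ^ 2 * ‖x - w i‖ ^ 2 + 2 * ε ^ 2 := by ring
  calc ∑ i, ‖f x - v i‖ ^ 2 ≤ ∑ i, (2 * L ^ 2 * ‖x - w i‖ ^ 2 + 2 * ε ^ 2) :=
        sum_le_sum fun i _ ↦ norm_sq_le i
    _ = 2 * L ^ 2 * ∑ i, ‖x - w i‖ ^ 2 + 2 * Fintype.card ι * ε ^ 2 := by
        rw [sum_add_distrib, ← mul_sum, sum_const, card_univ, nsmul_eq_mul]
        ring

theorem gradient_divergence_from_local_steps_general {E F ι : Type*} [SeminormedAddCommGroup E]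
    [NormedSpace ℝ E] [SeminormedAddCommGroup F] [Fintype ι] {η G L ε : ℝ} (hG : 0 ≤ G) {n : ℕ}
    {w : ι → E} {w₀ : E} {s : ι → ℕ} {g : ι → ℕ → E}
    (hs : ∀ i, s i ≤ n) (hg : ∀ i, ∀ e < s i, ‖g i e‖ ≤ G)
    (hw : ∀ i, w i = w₀ - η • ∑ e ∈ range (s i), g i e)
    {f : E → F} (hf : ∀ x y, ‖f x - f y‖ ≤ L * ‖x - y‖)
    {v : ι → F} (hv : ∀ i, ‖f (w i) - v i‖ ≤ ε)
    {x : E} (hx : x ∈ convexHull ℝ (Set.range w)) :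
    ∑ i, ‖f x - v i‖ ^ 2
      ≤ 8 * Fintype.card ι * η ^ 2 * n ^ 2 * G ^ 2 * L ^ 2 + 2 * Fintype.card ι * ε ^ 2 :=
  calc ∑ i, ‖f x - v i‖ ^ 2
      ≤ 2 * L ^ 2 * ∑ i, ‖x - w i‖ ^ 2 + 2 * Fintype.card ι * ε ^ 2 :=
        sum_norm_sub_sq_le_of_lipschitz (fun i ↦ hf x (w i)) hv
    _ ≤ 2 * L ^ 2 * (4 * Fintype.card ι * η ^ 2 * n ^ 2 * G ^ 2)
          + 2 * Fintype.card ι * ε ^ 2 := by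
        gcongr
        exact sum_norm_sub_sq_le_of_local_steps hG hs hg hw hx
    _ = 8 * Fintype.card ι * η ^ 2 * n ^ 2 * G ^ 2 * L ^ 2 + 2 * Fintype.card ι * ε ^ 2 := by
        ring

/-- Combination of Lemma 1 with the gradient divergence bound. -/
theorem gradient_divergence_from_local_steps
    {E : Type*} [NormedAddCommGroup E] [InnerProductSpace ℝ E]
    (K : ℕ) (hK : 0 < K) (η G L ε : ℝ) (hη : 0 ≤ η) (hG : 0 ≤ G)
    (hL : 0 ≤ L) (hε : 0 ≤ ε)
    (Emax : ℕ) (hE : 1 ≤ Emax)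
    (w : Fin K → E) (w₀ : E) (s : Fin K → ℕ) (g : Fin K → ℕ → E)
    (hs : ∀ k, s k ≤ Emax - 1)
    (hg : ∀ k, ∀ e < s k, ‖g k e‖ ≤ G)
    (hw : ∀ k, w k = w₀ - η • ∑ e ∈ Finset.range (s k), g k e)
    (gradF : E → E)
    (hLip : ∀ w₁ w₂ : E, ‖gradF w₁ - gradF w₂‖ ≤ L * ‖w₁ - w₂‖)
    (v : Fin K → E)
    (hv : ∀ k, ‖gradF (w k) - v k‖ ≤ ε) :
    ∑ k, ‖gradF ((1 / (K : ℝ)) • (∑ j, w j)) - v k‖ ^ 2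
      ≤ 8 * K * η ^ 2 * ((Emax : ℝ) - 1) ^ 2 * G ^ 2 * L ^ 2 + 2 * K * ε ^ 2 := by
  have : NeZero K := ⟨hK.ne'⟩
  simpa only [Fintype.card_fin, one_div, Nat.cast_pred hE] using
    gradient_divergence_from_local_steps_general hG hs hg hw hLip hv
      (inv_card_smul_sum_mem_convexHull_range w)
end

section
/- Let E be a real inner product space and let F : E → ℝ be differentiable with gradient ∇F : E → E that is Lipschitz with constant L ≥ 0. Let w, u ∈ E, η > 0, p ∈ ℝ with 0 < p ≤ 1, and A ≥ 0, B ≥ 0 real numbers. Assume ⟪∇F(w), u⟫ ≥ (p/2)(‖∇F(w)‖² − B) and ‖u‖² ≤ p A. Let w⁺ = w − η • u. Then ‖∇F(w)‖² ≤ (2/(η p))(F(w) − F(w⁺)) + B + η L A. -/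
open scoped RealInnerProductSpace

/-! When the derivative is Lipschitz at `w`, the remainder of the first-order Taylor expansion at
`w` has, along the segment to `w - η • u`, a derivative growing at most linearly. The remainder is
thus at most quadratic, and inserting the two bounds on `u` leaves an inequality to be divided by
`η * p / 2`. The argument only involves the dual norm of the derivative; the isometry `innerSL`
translates it to gradients. -/

section NormedSpace

variable {E G : Type*} [NormedAddCommGroup E] [NormedSpace ℝ E]
  [NormedAddCommGroup G] [NormedSpace ℝ G] {s : Set E} {x y : E} {L : ℝ}

theorem norm_image_sub_sub_fderiv_le_of_starConvex {f : E → G} {f' : E → E →L[ℝ] G}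
    (hs : StarConvex ℝ x s) (hy : y ∈ s)
    (hf : ∀ z ∈ s, HasFDerivWithinAt f (f' z) s z)
    (hLip : ∀ z ∈ s, ‖f' z - f' x‖ ≤ L * ‖z - x‖) :
    ‖f y - f x - f' x (y - x)‖ ≤ L / 2 * ‖y - x‖ ^ 2 := by
  let γ : ℝ → E := AffineMap.lineMap x y
  let remainder : ℝ → G := fun t ↦ f (γ t) - f x - t • f' x (y - x)
  have γ_mem : Set.MapsTo γ (Set.Icc 0 1) s := fun t ht ↦
    hs.segment_subset hy (segment_eq_image_lineMap ℝ x y ▸ Set.mem_image_of_mem γ ht)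
  have γ_sub (t : ℝ) : γ t - x = t • (y - x) := AffineMap.lineMap_vsub_left x y t
  have deriv_remainder (t : ℝ) (ht : t ∈ Set.Icc (0 : ℝ) 1) :
      HasDerivWithinAt remainder ((f' (γ t) - f' x) (y - x)) (Set.Icc 0 1) t := by
    have hfγ : HasDerivWithinAt (f ∘ γ) (f' (γ t) (y - x)) (Set.Icc 0 1) t :=
      (hf (γ t) (γ_mem ht)).comp_hasDerivWithinAt t AffineMap.hasDerivWithinAt_lineMap γ_mem
    simpa only [remainder, Function.comp_apply, id_eq, one_smul, sub_apply] using
      (hfγ.sub_const (f x)).fun_sub ((hasDerivWithinAt_id t _).smul_const (f' x (y - x)))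
  have norm_deriv_le (t : ℝ) (ht : t ∈ Set.Ico (0 : ℝ) 1) :
      ‖(f' (γ t) - f' x) (y - x)‖ ≤ L / 2 * ‖y - x‖ ^ 2 * (2 * t) :=
    calc ‖(f' (γ t) - f' x) (y - x)‖
        ≤ ‖f' (γ t) - f' x‖ * ‖y - x‖ := ContinuousLinearMap.le_opNorm _ _
      _ ≤ L * ‖γ t - x‖ * ‖y - x‖ := by
          gcongr
          exact hLip (γ t) (γ_mem (Set.Ico_subset_Icc_self ht))
      _ = L / 2 * ‖y - x‖ ^ 2 * (2 * t) := by
          rw [γ_sub, norm_smul, Real.norm_of_nonneg ht.1]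
          ring
  have norm_remainder_le : ‖remainder 1‖ ≤ L / 2 * ‖y - x‖ ^ 2 * 1 ^ 2 :=
    image_norm_le_of_norm_deriv_right_le_deriv_boundary
      (B := fun t ↦ L / 2 * ‖y - x‖ ^ 2 * t ^ 2)
      (fun t ht ↦ (deriv_remainder t ht).continuousWithinAt)
      (fun t ht ↦ (deriv_remainder t (Set.Ico_subset_Icc_self ht)).mono_of_mem_nhdsWithin
        (Icc_mem_nhdsGE_of_mem ht))
      (by simp [remainder, γ])
      (fun t ↦ by simpa using (hasDerivAt_pow 2 t).const_mul (L / 2 * ‖y - x‖ ^ 2))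
      norm_deriv_le (Set.right_mem_Icc.2 zero_le_one)
  simpa [remainder, γ] using norm_remainder_le

theorem image_sub_smul_le_of_starConvex {F : E → ℝ} {F' : E → E →L[ℝ] ℝ} {w u : E} {η : ℝ}
    (hs : StarConvex ℝ w s) (hstep : w - η • u ∈ s)
    (hdiff : ∀ z ∈ s, HasFDerivWithinAt F (F' z) s z)
    (hLip : ∀ z ∈ s, ‖F' z - F' w‖ ≤ L * ‖z - w‖) :
    F (w - η • u) ≤ F w - η * F' w u + η ^ 2 * L / 2 * ‖u‖ ^ 2 := by
  have taylor := (Real.le_norm_self _).trans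
    (norm_image_sub_sub_fderiv_le_of_starConvex hs hstep hdiff hLip)
  rw [sub_sub_cancel_left, map_neg, map_smul, smul_eq_mul, norm_neg, norm_smul, mul_pow,
    Real.norm_eq_abs, sq_abs] at taylor
  linarith

theorem per_round_gradient_bound_general {F : E → ℝ} {F' : E → E →L[ℝ] ℝ} {w u : E}
    {η p A B : ℝ} (hs : StarConvex ℝ w s) (hstep : w - η • u ∈ s)
    (hdiff : ∀ z ∈ s, HasFDerivWithinAt F (F' z) s z) (hL : 0 ≤ L)
    (hLip : ∀ z ∈ s, ‖F' z - F' w‖ ≤ L * ‖z - w‖) (hη : 0 < η) (hp : 0 < p)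
    (hdir : p / 2 * (‖F' w‖ ^ 2 - B) ≤ F' w u) (hu : ‖u‖ ^ 2 ≤ p * A) :
    ‖F' w‖ ^ 2 ≤ 2 / (η * p) * (F w - F (w - η • u)) + B + η * L * A := by
  have step_le : F (w - η • u) ≤
      F w - η * (p / 2 * (‖F' w‖ ^ 2 - B)) + η ^ 2 * L / 2 * (p * A) :=
    calc F (w - η • u)
        ≤ F w - η * F' w u + η ^ 2 * L / 2 * ‖u‖ ^ 2 :=
          image_sub_smul_le_of_starConvex hs hstep hdiff hLip
      _ ≤ F w - η * (p / 2 * (‖F' w‖ ^ 2 - B)) + η ^ 2 * L / 2 * (p * A) := by gcongr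
  calc ‖F' w‖ ^ 2
      ≤ (2 * (F w - F (w - η • u)) + η * p * (B + η * L * A)) / (η * p) := by
        rw [le_div_iff₀' (mul_pos hη hp)]
        linarith
    _ = 2 / (η * p) * (F w - F (w - η • u)) + B + η * L * A := by
        field_simp
        ring

end NormedSpace

/-- Per-round gradient bound assembled from the descent inequality and the
per-round bounds on the aggregated update. -/
theorem per_round_gradient_bound
    {E : Type*} [NormedAddCommGroup E] [InnerProductSpace ℝ E]
    (F : E → ℝ) (gradF : E → E) (F' : E → E →L[ℝ] ℝ)
    (hdiff : ∀ x : E, HasFDerivAt F (F' x) x)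
    (hgrad : ∀ x v : E, F' x v = ⟪gradF x, v⟫)
    (L : ℝ) (hL : 0 ≤ L)
    (hLip : ∀ w₁ w₂ : E, ‖gradF w₁ - gradF w₂‖ ≤ L * ‖w₁ - w₂‖)
    (w u : E) (η p A B : ℝ) (hη : 0 < η) (hp0 : 0 < p) (hp1 : p ≤ 1)
    (hA : 0 ≤ A) (hB : 0 ≤ B)
    (hinner : ⟪gradF w, u⟫ ≥ p / 2 * (‖gradF w‖ ^ 2 - B))
    (hu : ‖u‖ ^ 2 ≤ p * A) :
    ‖gradF w‖ ^ 2 ≤ 2 / (η * p) * (F w - F (w - η • u)) + B + η * L * A := by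
  obtain rfl : F' = fun x ↦ innerSL ℝ (gradF x) := funext fun x ↦ ContinuousLinearMap.ext (hgrad x)
  simpa only [innerSL_apply_norm] using per_round_gradient_bound_general (starConvex_univ w)
    (Set.mem_univ _) (fun z _ ↦ (hdiff z).hasFDerivWithinAt) hL
    (fun z _ ↦ by simpa only [← map_sub, innerSL_apply_norm] using hLip z w) hη hp0
    (by simpa only [innerSL_apply_norm] using! hinner) hu
end

section
/- Let E be a real inner product space, F : E → ℝ differentiable with gradient ∇F : E → E Lipschitz with constant L ≥ 0, and F_inf a real number with F_inf ≤ F(x) for all x ∈ E. Let T be a positive natural number, η > 0, and let ε_g ≥ 0, δ ≥ 0, G ≥ 0 be real numbers and Emax ≥ 1 a natural number. Let w : ℕ → E, u : ℕ → E, and p : ℕ → ℝ satisfy, for every t < T: (i) w (t+1) = w t − η • u t; (ii) 0 < p t ≤ 1; (iii) ⟪∇F(w t), u t⟫ ≥ (p t / 2)(‖∇F(w t)‖² − 2 ε_g² − 4 η² (Emax − 1)² G² L²); (iv) ‖u t‖² ≤ p t (δ² + G²). Assume moreover F(w t) ≤ F(w 0) for every t ≤ T. Then (1/T) ∑_{t=0}^{T−1}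 ‖∇F(w t)‖² ≤ (1/T) ∑_{t=0}^{T−1} (2/(η p t)) (F(w 0) − F_inf) + 2 ε_g² + η (δ² + G²) L + 4 η² (Emax − 1)² G² L². -/
open scoped RealInnerProductSpace

/-!
By the descent lemma, one step `w ↦ w - η • u` decreases `F` by at least
`η ⟪∇F w, u⟫ - L η² ‖u‖² / 2`. If `u` is correlated with the gradient up to a bias `B`, and
`‖u‖²` is at most `p V`, this decrease is at least `(η p / 2) (‖∇F w‖² - B - η V L)`. Since the
values of `F` at the iterates stay between `Finf` and `F (w 0)`, no single decrease exceeds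
`F (w 0) - Finf`. The ratios `p t` vary, so the decreases are not telescoped: each round is divided
by its own `η (p t) / 2`, and the resulting bounds on `‖∇F (w t)‖²` are averaged.
-/

section Taylor

open Set

variable {E F : Type*} [NormedAddCommGroup E] [NormedSpace ℝ E]
  [NormedAddCommGroup F] [NormedSpace ℝ F]

theorem norm_image_sub_sub_smul_deriv_le {f f' : ℝ → F} {a b C : ℝ} (hab : a ≤ b)
    (hf : ∀ t ∈ Icc a b, HasDerivWithinAt f (f' t) (Icc a b) t)
    (bound : ∀ t ∈ Ico a b, ‖f' t - f' a‖ ≤ C * (t - a)) :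
    ‖f b - f a - (b - a) • f' a‖ ≤ C / 2 * (b - a) ^ 2 := by
  have hg : ∀ t ∈ Icc a b,
      HasDerivWithinAt (fun t ↦ f t - f a - (t - a) • f' a) (f' t - f' a) (Icc a b) t := by
    intro t ht
    simpa only [id_eq, one_smul] using ((hf t ht).sub_const (f a)).fun_sub
      (((hasDerivWithinAt_id t (Icc a b)).sub_const a).smul_const (f' a))
  have hB : ∀ t, HasDerivAt (fun t ↦ C / 2 * (t - a) ^ 2) (C * (t - a)) t := by
    intro t
    refine ((((hasDerivAt_id t).sub_const a).pow 2).const_mul (C / 2)).congr_deriv ?_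
    simp only [id_eq, Nat.cast_ofNat, Nat.add_one_sub_one, pow_one, mul_one]
    ring
  exact image_norm_le_of_norm_deriv_right_le_deriv_boundary
    (fun t ht ↦ (hg t ht).continuousWithinAt)
    (fun t ht ↦ (hg t (Ico_subset_Icc_self ht)).mono_of_mem_nhdsWithin
      (Icc_mem_nhdsGE_of_mem ht))
    (by simp) hB bound (right_mem_Icc.2 hab)

theorem norm_image_sub_sub_fderiv_le_of_convex {f : E → F} {f' : E → E →L[ℝ] F} {s : Set E}
    {x y : E} {C : ℝ} (hs : Convex ℝ s) (hf : ∀ z ∈ s, HasFDerivWithinAt f (f' z) s z)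
    (bound : ∀ z ∈ s, ‖f' z - f' x‖ ≤ C * ‖z - x‖) (hx : x ∈ s) (hy : y ∈ s) :
    ‖f y - f x - f' x (y - x)‖ ≤ C / 2 * ‖y - x‖ ^ 2 := by
  let γ : ℝ → E := AffineMap.lineMap x y
  have hγ : MapsTo γ (Icc 0 1) s := hs.mapsTo_lineMap hx hy
  have hderiv : ∀ t ∈ Icc (0 : ℝ) 1,
      HasDerivWithinAt (f ∘ γ) (f' (γ t) (y - x)) (Icc 0 1) t := fun t ht ↦
    (hf (γ t) (hγ ht)).comp_hasDerivWithinAt t AffineMap.hasDerivWithinAt_lineMap hγ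
  have hbound : ∀ t ∈ Ico (0 : ℝ) 1,
      ‖f' (γ t) (y - x) - f' (γ 0) (y - x)‖ ≤ C * ‖y - x‖ ^ 2 * (t - 0) := by
    intro t ht
    have hdist : ‖γ t - x‖ = t * ‖y - x‖ := by
      simp [γ, AffineMap.lineMap_apply, norm_smul, abs_of_nonneg ht.1]
    calc ‖f' (γ t) (y - x) - f' (γ 0) (y - x)‖
        = ‖(f' (γ t) - f' x) (y - x)‖ := by simp [γ]
      _ ≤ C * ‖γ t - x‖ * ‖y - x‖ :=
        (f' (γ t) - f' x).le_of_opNorm_le (bound _ (hγ (Ico_subset_Icc_self ht))) _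
      _ = C * ‖y - x‖ ^ 2 * (t - 0) := by rw [hdist]; ring
  have htaylor := norm_image_sub_sub_smul_deriv_le zero_le_one hderiv hbound
  simp only [Function.comp_apply, γ, AffineMap.lineMap_apply_one, AffineMap.lineMap_apply_zero,
    sub_zero, one_smul, one_pow, mul_one] at htaylor
  exact htaylor.trans_eq (by ring)

end Taylor

theorem average_le_average_add_of_le_add {T : ℕ} (hT : 0 < T) {a b : ℕ → ℝ} {c : ℝ}
    (h : ∀ t < T, a t ≤ b t + c) :
    (1 / (T : ℝ)) * ∑ t ∈ Finset.range T, a t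
      ≤ (1 / (T : ℝ)) * ∑ t ∈ Finset.range T, b t + c := by
  have hT' : (T : ℝ) ≠ 0 := by positivity
  calc (1 / (T : ℝ)) * ∑ t ∈ Finset.range T, a t
      ≤ (1 / (T : ℝ)) * ∑ t ∈ Finset.range T, (b t + c) := by
        gcongr with t ht
        exact h t (Finset.mem_range.1 ht)
    _ = (1 / (T : ℝ)) * ∑ t ∈ Finset.range T, b t + c := by
        rw [Finset.sum_add_distrib, Finset.sum_const, Finset.card_range, nsmul_eq_mul]
        field_simp

section InexactDescent

variable {E : Type*} [NormedAddCommGroup E] [NormedSpace ℝ E]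
  {F : E → ℝ} {F' : E → E →L[ℝ] ℝ} {s : Set E} {L η B V : ℝ}

theorem image_sub_smul_le_of_convex {x u : E} (hs : Convex ℝ s)
    (hF : ∀ z ∈ s, HasFDerivWithinAt F (F' z) s z)
    (hLip : ∀ z ∈ s, ‖F' z - F' x‖ ≤ L * ‖z - x‖) (hx : x ∈ s) (hxu : x - η • u ∈ s) :
    F (x - η • u) ≤ F x - η * F' x u + L / 2 * η ^ 2 * ‖u‖ ^ 2 := by
  have htaylor := le_of_abs_le (norm_image_sub_sub_fderiv_le_of_convex hs hF hLip hx hxu)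
  rw [sub_sub_cancel_left, map_neg, map_smul, smul_eq_mul, norm_neg, norm_smul, mul_pow,
    Real.norm_eq_abs, sq_abs] at htaylor
  linarith

theorem norm_fderiv_sq_le_of_inexact_step {x u : E} {p : ℝ} (hs : Convex ℝ s)
    (hF : ∀ z ∈ s, HasFDerivWithinAt F (F' z) s z) (hL : 0 ≤ L)
    (hLip : ∀ z ∈ s, ‖F' z - F' x‖ ≤ L * ‖z - x‖) (hx : x ∈ s) (hxu : x - η • u ∈ s)
    (hη : 0 < η) (hp : 0 < p) (hcorr : p / 2 * (‖F' x‖ ^ 2 - B) ≤ F' x u)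
    (hu : ‖u‖ ^ 2 ≤ p * V) :
    ‖F' x‖ ^ 2 ≤ 2 / (η * p) * (F x - F (x - η • u)) + (B + η * V * L) := by
  have hdecrease : η * p / 2 * (‖F' x‖ ^ 2 - (B + η * V * L)) ≤ F x - F (x - η • u) :=
    calc η * p / 2 * (‖F' x‖ ^ 2 - (B + η * V * L))
        = η * (p / 2 * (‖F' x‖ ^ 2 - B)) - L / 2 * η ^ 2 * (p * V) := by ring
      _ ≤ η * F' x u - L / 2 * η ^ 2 * ‖u‖ ^ 2 := by gcongr
      _ ≤ F x - F (x - η • u) := by linarith [image_sub_smul_le_of_convex hs hF hLip hx hxu]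
  rw [← sub_le_iff_le_add, ← inv_div, inv_mul_eq_div, le_div_iff₀' (by positivity)]
  exact hdecrease

theorem mavfl_convergence_general {T : ℕ} (hT : 0 < T) {Finf : ℝ} {w u : ℕ → E} {p : ℕ → ℝ}
    (hs : Convex ℝ s) (hF : ∀ z ∈ s, HasFDerivWithinAt F (F' z) s z) (hL : 0 ≤ L)
    (hLip : ∀ x ∈ s, ∀ y ∈ s, ‖F' x - F' y‖ ≤ L * ‖x - y‖)
    (hη : 0 < η) (hw : ∀ t ≤ T, w t ∈ s)
    (hupd : ∀ t < T, w (t + 1) = w t - η • u t) (hp : ∀ t < T, 0 < p t)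
    (hcorr : ∀ t < T, p t / 2 * (‖F' (w t)‖ ^ 2 - B) ≤ F' (w t) (u t))
    (hu : ∀ t < T, ‖u t‖ ^ 2 ≤ p t * V)
    (hFinf : ∀ t ≤ T, Finf ≤ F (w t)) (hmono : ∀ t ≤ T, F (w t) ≤ F (w 0)) :
    (1 / (T : ℝ)) * ∑ t ∈ Finset.range T, ‖F' (w t)‖ ^ 2
      ≤ (1 / (T : ℝ)) * ∑ t ∈ Finset.range T, (2 / (η * p t)) * (F (w 0) - Finf)
        + (B + η * V * L) := by
  refine average_le_average_add_of_le_add hT fun t ht ↦ ?_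
  have hpt := hp t ht
  have hnext : w t - η • u t ∈ s := hupd t ht ▸ hw (t + 1) ht
  calc ‖F' (w t)‖ ^ 2
      ≤ 2 / (η * p t) * (F (w t) - F (w t - η • u t)) + (B + η * V * L) :=
        norm_fderiv_sq_le_of_inexact_step hs hF hL (fun z hz ↦ hLip z hz _ (hw t ht.le))
          (hw t ht.le) hnext hη hpt (hcorr t ht) (hu t ht)
    _ ≤ 2 / (η * p t) * (F (w 0) - Finf) + (B + η * V * L) := by
        rw [← hupd t ht]
        gcongr
        exacts [hmono t ht.le, hFinf (t + 1) ht]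

end InexactDescent

/-- Deterministic core of Theorem 1: convergence rate bound of the
mobility-aware vehicular federated learning scheme. -/
theorem mavfl_convergence
    {E : Type*} [NormedAddCommGroup E] [InnerProductSpace ℝ E]
    (F : E → ℝ) (gradF : E → E) (F' : E → E →L[ℝ] ℝ)
    (hdiff : ∀ x : E, HasFDerivAt F (F' x) x)
    (hgradrep : ∀ x v : E, F' x v = ⟪gradF x, v⟫)
    (L : ℝ) (hL : 0 ≤ L)
    (hLip : ∀ w₁ w₂ : E, ‖gradF w₁ - gradF w₂‖ ≤ L * ‖w₁ - w₂‖)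
    (Finf : ℝ) (hFinf : ∀ x : E, Finf ≤ F x)
    (T : ℕ) (hT : 0 < T) (η : ℝ) (hη : 0 < η)
    (εg δ G : ℝ) (hεg : 0 ≤ εg) (hδ : 0 ≤ δ) (hG : 0 ≤ G)
    (Emax : ℕ) (hE : 1 ≤ Emax)
    (w u : ℕ → E) (p : ℕ → ℝ)
    (hupd : ∀ t < T, w (t + 1) = w t - η • u t)
    (hp : ∀ t < T, 0 < p t ∧ p t ≤ 1)
    (hinner : ∀ t < T, ⟪gradF (w t), u t⟫
      ≥ p t / 2 * (‖gradF (w t)‖ ^ 2 - 2 * εg ^ 2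
          - 4 * η ^ 2 * ((Emax : ℝ) - 1) ^ 2 * G ^ 2 * L ^ 2))
    (hu : ∀ t < T, ‖u t‖ ^ 2 ≤ p t * (δ ^ 2 + G ^ 2))
    (hmono : ∀ t ≤ T, F (w t) ≤ F (w 0)) :
    (1 / (T : ℝ)) * ∑ t ∈ Finset.range T, ‖gradF (w t)‖ ^ 2
      ≤ (1 / (T : ℝ)) * ∑ t ∈ Finset.range T, (2 / (η * p t)) * (F (w 0) - Finf)
        + 2 * εg ^ 2 + η * (δ ^ 2 + G ^ 2) * L
        + 4 * η ^ 2 * ((Emax : ℝ) - 1) ^ 2 * G ^ 2 * L ^ 2 := by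
  obtain rfl : F' = fun x ↦ innerSL ℝ (gradF x) := by ext x v; exact hgradrep x v
  have hbound := mavfl_convergence_general (s := Set.univ) (V := δ ^ 2 + G ^ 2)
    (B := 2 * εg ^ 2 + 4 * η ^ 2 * ((Emax : ℝ) - 1) ^ 2 * G ^ 2 * L ^ 2)
    hT convex_univ (fun x _ ↦ (hdiff x).hasFDerivWithinAt) hL
    (fun x _ y _ ↦ by simpa only [← map_sub, innerSL_apply_norm] using hLip x y)
    hη (fun _ _ ↦ Set.mem_univ _) hupd (fun t ht ↦ (hp t ht).1)
    (fun t ht ↦ by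
      simpa only [innerSL_apply_norm, innerSL_apply_apply, ← sub_sub] using hinner t ht)
    hu (fun t _ ↦ hFinf (w t)) hmono
  simp only [innerSL_apply_norm] at hbound
  linarith
end
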